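/- Let l > 0 and k > 7/2. There exists a constant C depending only on k and l such that for every R ≥ 1, every radial smooth cutoff ψ^R ∈ C_c^∞(B(0,R)) with 1_{{|v|≤R/2}} ≤ ψ^R ≤ 1_{{|v|≤R}} and ‖∂^α ψ^R‖_∞ ≤ C_α R^{−|α|} for |α| ≤ 2, and every Schwartz function h on ℝ³: ‖R(h)‖_{L²_k} ≤ C R^{−l} ‖h‖²_{H²_{k+l}}, where the residual operator is R(h) := Q(h ψ^R, h ψ^R) ψ^R − Q(h, h). -/

import Mathlib

/-!
For equal arguments the two first-order terms of the divergence cancel (the matrix `a` is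
symmetric), so `Q(f,f) = ∑ᵢⱼ (a_ij * f) ∂ᵢⱼf - f ∑ᵢⱼ a_ij * ∂ᵢⱼf` with both derivatives on `f`
(`landauQ_eq`). Keeping the derivatives on `f`, rather than integrating by parts to reach the local
term `8π f²`, makes every convolution one with a kernel of size `|z|⁻¹`. By Cauchy–Schwarz
`|a_ij * g| ≤ C ‖g‖_{L²_k}` uniformly in `v`, because `∫ |v-w|⁻² ⟨w⟩^{-2k} dw` is bounded in `v`
(`memLp_kernel`, `abs_cv_le`); no Sobolev embedding is needed.

All functions involved are dominated pointwise by `G = ∑_{|m| ≤ 2} |∂^m h|`. The factor `R^{-l}` is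
gained in one of two ways (`residual_pointwise`). If `|v| ≥ R/2`, then
`⟨v⟩^k ≤ 2^l R^{-l} ⟨v⟩^{k+l}` at the point `v` itself. If `|v| < R/2`, then `ψ = 1` near `v` and
`R(h)(v) = ∑ᵢⱼ (a_ij * q) ∂ᵢⱼh - h ∑ᵢⱼ a_ij * ∂ᵢⱼq` with `q = h (ψ - 1)`, which lives on
`|w| ≥ R/2`, so the same inequality applies inside the convolution. Squaring and integrating the
resulting pointwise bound gives the theorem.
-/

open MeasureTheory Real Finset

noncomputable section

abbrev E3 := EuclideanSpace ℝ (Fin 3)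

/-- The Japanese bracket `⟨v⟩ = √(1+|v|²)`. -/
def jap (v : E3) : ℝ := Real.sqrt (1 + ‖v‖ ^ 2)

/-- The projection matrix `Π(z)` with entries `δ_ij − z_i z_j / |z|²`. -/
def Pi3 (z : E3) : Matrix (Fin 3) (Fin 3) ℝ :=
  Matrix.of fun i j => (if i = j then (1 : ℝ) else 0) - z i * z j / ‖z‖ ^ 2

/-- The Coulomb Landau kernel `a(z) = |z|⁻¹ Π(z)`. -/
def aK (z : E3) : Matrix (Fin 3) (Fin 3) ℝ :=
  Matrix.of fun i j => ‖z‖⁻¹ * Pi3 z i j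

/-- Partial derivative `∂_i f`. -/
def pd (i : Fin 3) (f : E3 → ℝ) : E3 → ℝ :=
  fun v => fderiv ℝ f v (EuclideanSpace.single i 1)

/-- The Landau collision operator with Coulomb potential:
`Q(g,h)(v) = ∇_v · ∫ a(v−v*) ( g(v*) ∇h(v) − ∇g(v*) h(v) ) dv*`. -/
def landauQ (g h : E3 → ℝ) : E3 → ℝ := fun v =>
  ∑ i : Fin 3, fderiv ℝ (fun w =>
      ∫ vs : E3, ∑ j : Fin 3, aK (w - vs) i j * (g vs * pd j h w - pd j g vs * h w)) v
    (EuclideanSpace.single i 1)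

/-- The pairing `⟨f,g⟩ = ∫ f g dv`. -/
def pairL (f g : E3 → ℝ) : ℝ := ∫ v : E3, f v * g v

/-- Weighted Lebesgue norm `‖f‖_{L^p_l} = (∫ |f|^p ⟨v⟩^{lp})^{1/p}`. -/
def Lpl (p l : ℝ) (f : E3 → ℝ) : ℝ :=
  (∫ v : E3, |f v| ^ p * jap v ^ (l * p)) ^ (1 / p)

/-- Iterated partial derivative in direction `i`. -/
def pdPow (i : Fin 3) : ℕ → (E3 → ℝ) → E3 → ℝ
  | 0, f => f
  | n + 1, f => pd i (pdPow i n f)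

/-- Multi-index partial derivative `∂^m f`. -/
def pdM (m : Fin 3 → ℕ) (f : E3 → ℝ) : E3 → ℝ :=
  pdPow 0 (m 0) (pdPow 1 (m 1) (pdPow 2 (m 2) f))

/-- Multi-indices `m` with `|m| ≤ n`. -/
def multiIdx (n : ℕ) : Finset (Fin 3 → ℕ) :=
  (Fintype.piFinset fun _ : Fin 3 => Finset.range (n + 1)).filter fun m => (∑ i, m i) ≤ n

/-- Square of the weighted Sobolev norm `‖f‖²_{H^n_l} = Σ_{|m|≤n} ‖∂^m f‖²_{L²_l}`. -/
def HSobSq (n : ℕ) (l : ℝ) (f : E3 → ℝ) : ℝ :=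
  ∑ m ∈ multiIdx n, (Lpl 2 l (pdM m f)) ^ 2

/-- Weighted Sobolev norm `‖f‖_{H^n_l}`. -/
def HSob (n : ℕ) (l : ℝ) (f : E3 → ℝ) : ℝ :=
  Real.sqrt (HSobSq n l f)

/-- Rotational derivative `(v_i ∂_j − v_j ∂_i) f`. -/
def rotD (i j : Fin 3) (f : E3 → ℝ) : E3 → ℝ :=
  fun v => v i * pd j f v - v j * pd i f v

/-- Square of the anisotropic norm
`‖f‖²_{𝖧¹_A} = Σ_{i<j} ‖(v_i ∂_j − v_j ∂_i) f‖²_{L²_{−3/2}} + ‖f‖²_{H¹_{−3/2}}`. -/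
def HAsq (f : E3 → ℝ) : ℝ :=
  (∑ p ∈ Finset.univ.filter (fun p : Fin 3 × Fin 3 => p.1 < p.2),
    (Lpl 2 (-(3/2)) (rotD p.1 p.2 f)) ^ 2) + HSobSq 1 (-(3/2)) f

/-- The anisotropic norm `‖f‖_{𝖧¹_A}`. -/
def HA (f : E3 → ℝ) : ℝ := Real.sqrt (HAsq f)

end

noncomputable section

/-- The residual operator `R(h) := Q(hψ, hψ)ψ − Q(h,h)` for a cutoff `ψ`. -/
def residualR (ψ h : E3 → ℝ) : E3 → ℝ := fun v =>
  landauQ (fun w => h w * ψ w) (fun w => h w * ψ w) v * ψ v - landauQ h h v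

/-! ### The Coulomb kernel -/

lemma abs_aK_le (z : E3) (i j : Fin 3) : |aK z i j| ≤ 2 * ‖z‖⁻¹ := by
  have hc : ∀ i, |z i| ≤ ‖z‖ := fun i => by
    simpa using PiLp.norm_apply_le z i
  have h1 : |z i * z j / ‖z‖ ^ 2| ≤ 1 := by
    rw [abs_div, abs_mul, abs_of_nonneg (sq_nonneg ‖z‖)]
    apply div_le_one_of_le₀ _ (by positivity)
    rw [sq]
    exact mul_le_mul (hc i) (hc j) (abs_nonneg _) (norm_nonneg _)
  have h2 : |(if i = j then (1 : ℝ) else 0)| ≤ 1 := by split_ifs <;> simp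
  have h3 : |Pi3 z i j| ≤ 2 := by
    simp only [Pi3, Matrix.of_apply]
    exact (abs_sub _ _).trans (by linarith)
  simp only [aK, Matrix.of_apply, abs_mul, abs_inv, abs_norm]
  rw [mul_comm]
  exact mul_le_mul_of_nonneg_right h3 (by positivity)

lemma aK_symm (z : E3) (i j : Fin 3) : aK z i j = aK z j i := by
  simp only [aK, Pi3, Matrix.of_apply, mul_comm (z i), eq_comm (a := i)]

lemma measurable_aK (i j : Fin 3) : Measurable fun z : E3 => aK z i j := by
  simp only [aK, Pi3, Matrix.of_apply]
  have hc : ∀ i : Fin 3, Measurable fun z : E3 => z i := fun i =>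
    (EuclideanSpace.proj (𝕜 := ℝ) i).continuous.measurable
  have := hc i
  have := hc j
  fun_prop

/-- The local part `|z|⁻² 1_{|z|<1}` of the squared Coulomb singularity; it is integrable on `ℝ³`
and, together with the constant `1`, dominates both `|z|⁻¹` and `|z|⁻²`. -/
def qK : E3 → ℝ := (Metric.ball (0 : E3) 1).indicator fun z => (‖z‖ ^ 2)⁻¹

lemma qK_nonneg (z : E3) : 0 ≤ qK z := Set.indicator_nonneg (fun _ _ => by positivity) z

lemma integrable_qK : Integrable qK := by
  rw [qK, integrable_indicator_iff measurableSet_ball,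
    integrableOn_fun_norm_addHaar volume (f := fun y : ℝ => (y ^ 2)⁻¹)]
  have : IntegrableOn (fun _ : ℝ => (1 : ℝ)) (Set.Ioo 0 1) := by simp
  refine this.congr_fun (fun y hy => ?_) measurableSet_Ioo
  have : y ≠ 0 := hy.1.ne'
  simp [this]

lemma inv_sq_le_qK (z : E3) : (‖z‖⁻¹) ^ 2 ≤ qK z + 1 := by
  by_cases hz : ‖z‖ < 1
  · simp [qK, hz]
  · have : ‖z‖⁻¹ ≤ 1 := inv_le_one_of_one_le₀ (not_lt.1 hz)
    have h0 : 0 ≤ ‖z‖⁻¹ := by positivity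
    have := qK_nonneg z
    nlinarith

lemma inv_le_qK (z : E3) : ‖z‖⁻¹ ≤ qK z + 1 := by
  by_cases hz : ‖z‖⁻¹ ≤ 1
  · linarith [qK_nonneg z]
  · nlinarith [inv_sq_le_qK z]

/-! ### Schwartz functions: decay and derivatives -/

lemma schwartz_decay {V : Type*} [NormedAddCommGroup V] [NormedSpace ℝ V] (g : SchwartzMap E3 V)
    (n : ℕ) : ∃ D : ℝ, 0 ≤ D ∧ ∀ x, (1 + ‖x‖) ^ n * ‖g x‖ ≤ D := by
  have h := fun x => SchwartzMap.one_add_le_sup_seminorm_apply (𝕜 := ℝ) (m := (n, 0)) (k := n)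
    (n := 0) le_rfl le_rfl g x
  simp only [norm_iteratedFDeriv_zero] at h
  exact ⟨_, le_trans (by positivity) (h 0), h⟩

lemma schwartz_pd (g : SchwartzMap E3 ℝ) (i : Fin 3) :
    ∃ g' : SchwartzMap E3 ℝ, (⇑g' : E3 → ℝ) = pd i ⇑g :=
  ⟨LineDeriv.lineDerivOp (EuclideanSpace.single i 1 : E3) g, by
    ext x; rw [SchwartzMap.lineDerivOp_apply_eq_fderiv]; rfl⟩

lemma schwartz_pdPow (g : SchwartzMap E3 ℝ) (i : Fin 3) (n : ℕ) :
    ∃ g' : SchwartzMap E3 ℝ, (⇑g' : E3 → ℝ) = pdPow i n ⇑g := by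
  induction n with
  | zero => exact ⟨g, rfl⟩
  | succ n ih =>
    obtain ⟨g₁, h₁⟩ := ih
    obtain ⟨g₂, h₂⟩ := schwartz_pd g₁ i
    exact ⟨g₂, by rw [h₂, h₁]; rfl⟩

lemma schwartz_pdM (g : SchwartzMap E3 ℝ) (m : Fin 3 → ℕ) :
    ∃ g' : SchwartzMap E3 ℝ, (⇑g' : E3 → ℝ) = pdM m ⇑g := by
  obtain ⟨g₁, h₁⟩ := schwartz_pdPow g 2 (m 2)
  obtain ⟨g₂, h₂⟩ := schwartz_pdPow g₁ 1 (m 1)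
  obtain ⟨g₃, h₃⟩ := schwartz_pdPow g₂ 0 (m 0)
  exact ⟨g₃, by rw [h₃, h₂, h₁]; rfl⟩

lemma integrable_inv_pow_four : Integrable fun x : E3 => ((1 + ‖x‖) ^ 4)⁻¹ := by
  have h := integrable_one_add_norm (E := E3) (μ := volume) (r := 4) (by simp; norm_num)
  refine h.congr (.of_forall fun x => ?_)
  simp only
  rw [rpow_neg (by positivity)]
  norm_cast

lemma jap_pos (v : E3) : 0 < jap v := Real.sqrt_pos.2 (by positivity)

lemma one_le_jap (v : E3) : 1 ≤ jap v := Real.one_le_sqrt.2 (by nlinarith [sq_nonneg ‖v‖])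

lemma norm_le_jap (v : E3) : ‖v‖ ≤ jap v := Real.le_sqrt_of_sq_le (by linarith)

lemma jap_le (v : E3) : jap v ≤ 1 + ‖v‖ :=
  Real.sqrt_le_iff.2 ⟨by positivity, by nlinarith [norm_nonneg v]⟩

lemma continuous_jap : Continuous jap := by unfold jap; fun_prop

lemma continuous_jap_rpow (s : ℝ) : Continuous fun v => jap v ^ s :=
  continuous_jap.rpow_const fun v => Or.inl (jap_pos v).ne'

lemma memLp_schwartz_weight (g : SchwartzMap E3 ℝ) (s : ℝ) :
    MemLp (fun v => |g v| * jap v ^ s) 2 volume := by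
  have hcont : Continuous fun v => |g v| * jap v ^ s := (g.continuous.abs).mul (continuous_jap_rpow s)
  rw [memLp_two_iff_integrable_sq hcont.aestronglyMeasurable]
  obtain ⟨n, hn⟩ := exists_nat_ge s
  obtain ⟨D, hD, h⟩ := schwartz_decay g (n + 2)
  refine (integrable_inv_pow_four.const_mul (D ^ 2)).mono' (hcont.pow 2).aestronglyMeasurable
    (.of_forall fun x => ?_)
  have h1 : jap x ^ s ≤ (1 + ‖x‖) ^ n :=
    calc jap x ^ s ≤ jap x ^ (n : ℝ) := rpow_le_rpow_of_exponent_le (one_le_jap x) hn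
      _ = jap x ^ n := rpow_natCast _ _
      _ ≤ _ := pow_le_pow_left₀ (jap_pos x).le (jap_le x) n
  have hx := h x
  have h0 : 0 ≤ jap x ^ s := rpow_nonneg (jap_pos x).le s
  have h2 : (1 + ‖x‖) ^ 2 * (|g x| * jap x ^ s) ≤ D := by
    refine le_trans ?_ hx
    rw [pow_add, Real.norm_eq_abs]
    calc (1 + ‖x‖) ^ 2 * (|g x| * jap x ^ s) ≤ (1 + ‖x‖) ^ 2 * (|g x| * (1 + ‖x‖) ^ n) := by gcongr
      _ = _ := by ring
  rw [Real.norm_eq_abs, abs_of_nonneg (by positivity), ← div_eq_mul_inv, le_div_iff₀ (by positivity)]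
  calc _ = ((1 + ‖x‖) ^ 2 * (|g x| * jap x ^ s)) ^ 2 := by ring
    _ ≤ D ^ 2 := pow_le_pow_left₀ (by positivity) h2 2

/-! ### Convolution with the kernel -/

/-- The convolution `(a_ij * g)(v)`. -/
def cv (i j : Fin 3) (g : E3 → ℝ) (v : E3) : ℝ := ∫ w, aK (v - w) i j * g w

lemma integrable_aK_mul_aux (i j : Fin 3) {f : E3 → ℝ} (hf : Continuous f) {D : ℝ}
    (hD : ∀ z, |f z| ≤ D * ((1 + ‖z‖) ^ 4)⁻¹) : Integrable fun z => aK z i j * f z := by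
  have hD0 : 0 ≤ D := by have := (abs_nonneg _).trans (hD 0); simpa using this
  refine ((integrable_qK.const_mul (2 * D)).add (integrable_inv_pow_four.const_mul (2 * D))).mono'
    ((measurable_aK i j).mul hf.measurable).aestronglyMeasurable (.of_forall fun z => ?_)
  have h1 : ((1 + ‖z‖) ^ 4)⁻¹ ≤ 1 := inv_le_one_of_one_le₀ (one_le_pow₀ (by simp))
  have h2 : 0 ≤ ((1 + ‖z‖) ^ 4)⁻¹ := by positivity
  have hq := qK_nonneg z
  rw [Real.norm_eq_abs, abs_mul]
  calc |aK z i j| * |f z| ≤ (2 * (qK z + 1)) * (D * ((1 + ‖z‖) ^ 4)⁻¹) :=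
        mul_le_mul ((abs_aK_le z i j).trans (by linarith [inv_le_qK z])) (hD z) (abs_nonneg _)
          (by positivity)
    _ = 2 * D * (qK z * ((1 + ‖z‖) ^ 4)⁻¹) + 2 * D * ((1 + ‖z‖) ^ 4)⁻¹ := by ring
    _ ≤ 2 * D * qK z + 2 * D * ((1 + ‖z‖) ^ 4)⁻¹ := by
        have : qK z * ((1 + ‖z‖) ^ 4)⁻¹ ≤ qK z := mul_le_of_le_one_right hq h1
        gcongr

/-- Polynomial decay of a Schwartz map is stable under translation by a bounded vector. -/
lemma decay_translate {V : Type*} [NormedAddCommGroup V] [NormedSpace ℝ V] (g : SchwartzMap E3 V)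
    (r : ℝ) : ∃ D : ℝ, 0 ≤ D ∧ ∀ w z : E3, ‖w‖ ≤ r → ‖g (w - z)‖ ≤ D * ((1 + ‖z‖) ^ 4)⁻¹ := by
  obtain ⟨D, hD, h⟩ := schwartz_decay g 4
  refine ⟨(1 + |r|) ^ 4 * D, by positivity, fun w z hw => ?_⟩
  rw [← div_eq_mul_inv, le_div_iff₀ (by positivity)]
  have h1 : 1 + ‖z‖ ≤ (1 + |r|) * (1 + ‖w - z‖) := by
    have h2 : ‖z‖ ≤ ‖w‖ + ‖w - z‖ := by
      calc ‖z‖ = ‖w - (w - z)‖ := by congr 1; abel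
        _ ≤ _ := norm_sub_le _ _
    have := le_abs_self r
    have := mul_nonneg (abs_nonneg r) (norm_nonneg (w - z))
    nlinarith
  calc ‖g (w - z)‖ * (1 + ‖z‖) ^ 4 ≤ ‖g (w - z)‖ * ((1 + |r|) * (1 + ‖w - z‖)) ^ 4 := by gcongr
    _ = (1 + |r|) ^ 4 * ((1 + ‖w - z‖) ^ 4 * ‖g (w - z)‖) := by ring
    _ ≤ _ := by gcongr; exact h _

lemma integrable_aK_conv (i j : Fin 3) (g : SchwartzMap E3 ℝ) (w : E3) :
    Integrable fun z => aK z i j * g (w - z) := by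
  obtain ⟨D, -, h⟩ := decay_translate g ‖w‖
  exact integrable_aK_mul_aux i j (g.continuous.comp (continuous_const.sub continuous_id))
    fun z => h w z le_rfl

lemma integrable_aK (i j : Fin 3) (g : SchwartzMap E3 ℝ) (w : E3) :
    Integrable fun z => aK (w - z) i j * g z := by
  have := (integrable_aK_conv i j g w).comp_sub_left w
  simpa using this

lemma cv_eq (i j : Fin 3) (g : E3 → ℝ) (w : E3) : cv i j g w = ∫ z, aK z i j * g (w - z) := by
  rw [cv, ← integral_sub_left_eq_self _ volume w]
  simp

/-- Differentiating `a_ij * g` puts the derivative on `g`, as `a_ij` is locally integrable. -/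
lemma hasFDerivAt_cv (i j : Fin 3) (g : SchwartzMap E3 ℝ) (w : E3) :
    ∃ L : E3 →L[ℝ] ℝ, HasFDerivAt (cv i j ⇑g) L w ∧
      ∀ m : Fin 3, L (EuclideanSpace.single m 1) = cv i j (pd m ⇑g) w := by
  have hfun : cv i j ⇑g = fun x => ∫ z, aK z i j * g (x - z) := funext (cv_eq i j _)
  set g' := SchwartzMap.fderivCLM ℝ E3 ℝ g with hg'
  obtain ⟨D, hD, hdec⟩ := decay_translate g' (‖w‖ + 1)
  have hmeas : AEStronglyMeasurable (fun z => aK z i j • g' (w - z)) volume :=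
    (measurable_aK i j).aestronglyMeasurable.smul
      (g'.continuous.comp (continuous_const.sub continuous_id)).aestronglyMeasurable
  have hbd : Integrable fun z : E3 => 2 * D * qK z + 2 * D * ((1 + ‖z‖) ^ 4)⁻¹ :=
    (integrable_qK.const_mul (2 * D)).add (integrable_inv_pow_four.const_mul (2 * D))
  have hle : ∀ z : E3, ∀ x ∈ Metric.ball w 1, ‖aK z i j • g' (x - z)‖ ≤
      2 * D * qK z + 2 * D * ((1 + ‖z‖) ^ 4)⁻¹ := by
    intro z x hx
    have hxn : ‖x‖ ≤ ‖w‖ + 1 := by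
      have h1 : ‖x - w‖ < 1 := by simpa [dist_eq_norm] using hx
      have := norm_le_norm_add_norm_sub' x w
      linarith
    have h1 : ((1 + ‖z‖) ^ 4)⁻¹ ≤ 1 := inv_le_one_of_one_le₀ (one_le_pow₀ (by simp))
    have hq := qK_nonneg z
    rw [norm_smul, Real.norm_eq_abs]
    calc |aK z i j| * ‖g' (x - z)‖ ≤ (2 * (qK z + 1)) * (D * ((1 + ‖z‖) ^ 4)⁻¹) :=
          mul_le_mul ((abs_aK_le z i j).trans (by linarith [inv_le_qK z])) (hdec x z hxn)
            (norm_nonneg _) (by positivity)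
      _ = 2 * D * (qK z * ((1 + ‖z‖) ^ 4)⁻¹) + 2 * D * ((1 + ‖z‖) ^ 4)⁻¹ := by ring
      _ ≤ 2 * D * qK z + 2 * D * ((1 + ‖z‖) ^ 4)⁻¹ := by
          have : qK z * ((1 + ‖z‖) ^ 4)⁻¹ ≤ qK z := mul_le_of_le_one_right hq h1
          gcongr
  have key := hasFDerivAt_integral_of_dominated_of_fderiv_le (𝕜 := ℝ) (μ := volume)
    (F := fun x z => aK z i j * g (x - z)) (F' := fun x z => aK z i j • g' (x - z)) (x₀ := w)
    (Metric.ball_mem_nhds w one_pos)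
    (.of_forall fun x => (integrable_aK_conv i j g x).aestronglyMeasurable)
    (integrable_aK_conv i j g w) hmeas (.of_forall hle) hbd
    (.of_forall fun z x _ => by
      have h1 : HasFDerivAt (fun x => g (x - z)) (g' (x - z)) x := by
        have := (g.hasFDerivAt (x - z)).comp x ((hasFDerivAt_id x).sub_const z)
        rw [ContinuousLinearMap.comp_id] at this
        exact this
      exact h1.const_mul _)
  refine ⟨_, hfun ▸ key, fun m => ?_⟩
  have hint : Integrable (fun z => aK z i j • g' (w - z)) :=
    hbd.mono' hmeas (.of_forall fun z => hle z w (Metric.mem_ball_self one_pos))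
  rw [ContinuousLinearMap.integral_apply hint, cv_eq]
  rfl

lemma pd_comm {f : E3 → ℝ} (hf : ContDiff ℝ (⊤ : ℕ∞) f) (i j : Fin 3) :
    pd i (pd j f) = pd j (pd i f) := by
  have h2 : (2 : WithTop ℕ∞) ≤ ((⊤ : ℕ∞) : WithTop ℕ∞) :=
    WithTop.coe_le_coe.2 (le_top (a := (2 : ℕ∞)))
  have hd : ∀ v, DifferentiableAt ℝ (fderiv ℝ f) v := fun v =>
    ((hf.fderiv_right (m := 1) (by rw [one_add_one_eq_two]; exact h2)).differentiable one_ne_zero) v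
  have h : ∀ i j v, pd i (pd j f) v =
      fderiv ℝ (fderiv ℝ f) v (EuclideanSpace.single i 1) (EuclideanSpace.single j 1) := by
    intro i j v
    have h1 : HasFDerivAt (pd j f) _ v :=
      (hd v).hasFDerivAt.clm_apply (hasFDerivAt_const (EuclideanSpace.single j 1) v)
    rw [pd, h1.fderiv]
    simp
  ext v
  rw [h, h]
  have hs : IsSymmSndFDerivAt ℝ f v := hf.contDiffAt.isSymmSndFDerivAt (by simpa using h2)
  exact hs _ _

lemma contDiff_pd {f : E3 → ℝ} (hf : ContDiff ℝ (⊤ : ℕ∞) f) (i : Fin 3) :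
    ContDiff ℝ (⊤ : ℕ∞) (pd i f) :=
  (hf.fderiv_right (m := (⊤ : ℕ∞)) (by exact_mod_cast le_top)).clm_apply contDiff_const

/-- For the Landau operator with equal arguments the first-order terms cancel, by the symmetry of
`a`, and `Q(f,f) = ∑ᵢⱼ (a_ij * f) ∂ᵢⱼf - f ∑ᵢⱼ a_ij * ∂ᵢⱼf`. -/
lemma landauQ_eq (f : SchwartzMap E3 ℝ) (v : E3) :
    landauQ ⇑f ⇑f v = ∑ i : Fin 3, ∑ j : Fin 3,
      (cv i j ⇑f v * pd i (pd j ⇑f) v - f v * cv i j (pd i (pd j ⇑f)) v) := by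
  have hfs : ContDiff ℝ (⊤ : ℕ∞) ⇑f := f.smooth _
  have hF : ∀ i : Fin 3, (fun w => ∫ vs : E3, ∑ j : Fin 3,
      aK (w - vs) i j * (f vs * pd j ⇑f w - pd j ⇑f vs * f w)) =
      fun w => ∑ j : Fin 3, (cv i j ⇑f w * pd j ⇑f w - cv i j (pd j ⇑f) w * f w) := by
    intro i
    ext w
    have hi : ∀ j, Integrable fun vs => aK (w - vs) i j * f vs * pd j ⇑f w := fun j =>
      (integrable_aK i j f w).mul_const _
    have hi' : ∀ j, Integrable fun vs => aK (w - vs) i j * pd j ⇑f vs * f w := fun j => by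
      obtain ⟨g, hg⟩ := schwartz_pd f j
      rw [← hg]
      exact (integrable_aK i j g w).mul_const _
    have he : ∀ j vs, aK (w - vs) i j * (f vs * pd j ⇑f w - pd j ⇑f vs * f w) =
        aK (w - vs) i j * f vs * pd j ⇑f w - aK (w - vs) i j * pd j ⇑f vs * f w := by
      intros; ring
    have hs : ∀ j ∈ (Finset.univ : Finset (Fin 3)), Integrable fun vs =>
        aK (w - vs) i j * f vs * pd j ⇑f w - aK (w - vs) i j * pd j ⇑f vs * f w :=
      fun j _ => (hi j).sub (hi' j)
    simp only [he]
    refine (integral_finsetSum _ hs).trans ?_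
    refine Finset.sum_congr rfl fun j _ => ?_
    rw [integral_sub (hi j) (hi' j), integral_mul_const, integral_mul_const]
    rfl
  have hD : ∀ i : Fin 3, fderiv ℝ (fun w => ∑ j : Fin 3,
      (cv i j ⇑f w * pd j ⇑f w - cv i j (pd j ⇑f) w * f w)) v (EuclideanSpace.single i 1) =
      ∑ j : Fin 3, (cv i j ⇑f v * pd i (pd j ⇑f) v + cv i j (pd i ⇑f) v * pd j ⇑f v
        - (cv i j (pd j ⇑f) v * pd i ⇑f v + f v * cv i j (pd i (pd j ⇑f)) v)) := by
    intro i
    have h : ∀ j : Fin 3, ∃ L : E3 →L[ℝ] ℝ, HasFDerivAt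
        (fun w => cv i j ⇑f w * pd j ⇑f w - cv i j (pd j ⇑f) w * f w) L v ∧
        L (EuclideanSpace.single i 1) =
        (cv i j ⇑f v * pd i (pd j ⇑f) v + cv i j (pd i ⇑f) v * pd j ⇑f v
        - (cv i j (pd j ⇑f) v * pd i ⇑f v + f v * cv i j (pd i (pd j ⇑f)) v)) := by
      intro j
      obtain ⟨L₁, h₁, e₁⟩ := hasFDerivAt_cv i j f v
      obtain ⟨g, hg⟩ := schwartz_pd f j
      obtain ⟨L₂, h₂, e₂⟩ := hasFDerivAt_cv i j g v
      rw [hg] at h₂ e₂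
      have h₃ : HasFDerivAt (pd j ⇑f) (fderiv ℝ (pd j ⇑f) v) v :=
        (((contDiff_pd hfs j).differentiable (by simp)) v).hasFDerivAt
      refine ⟨_, (h₁.mul h₃).sub (h₂.mul (f.hasFDerivAt v)), ?_⟩
      simp only [_root_.sub_apply, _root_.add_apply,
        _root_.smul_apply, smul_eq_mul, e₁, e₂]
      simp only [pd]
      ring
    choose L hL hLe using h
    rw [(HasFDerivAt.fun_sum fun j _ => hL j).fderiv, _root_.sum_apply]
    exact Finset.sum_congr rfl fun j _ => hLe j
  have hsymm : ∀ (i j : Fin 3) (g : E3 → ℝ), cv i j g v = cv j i g v := fun i j g => by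
    simp only [cv, aK_symm _ i j]
  have hcancel : ∑ i : Fin 3, ∑ j : Fin 3, cv i j (pd i ⇑f) v * pd j ⇑f v =
      ∑ i : Fin 3, ∑ j : Fin 3, cv i j (pd j ⇑f) v * pd i ⇑f v := by
    rw [Finset.sum_comm]
    exact Finset.sum_congr rfl fun i _ => Finset.sum_congr rfl fun j _ => by rw [hsymm]
  simp only [landauQ, hF, hD]
  simp only [Finset.sum_sub_distrib, Finset.sum_add_distrib]
  rw [hcancel]
  ring

/-! ### The pointwise majorant `∑_{|m| ≤ 2} |∂^m h|` -/

/-- The sum of the absolute values of all partial derivatives of order at most two. -/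
def Gs (h : E3 → ℝ) (v : E3) : ℝ := ∑ m ∈ multiIdx 2, |pdM m h v|

lemma Gs_nonneg (h : E3 → ℝ) (v : E3) : 0 ≤ Gs h v := Finset.sum_nonneg fun _ _ => abs_nonneg _

lemma mem_multiIdx_two (m : Fin 3 → ℕ) (hm : m 0 + m 1 + m 2 ≤ 2) : m ∈ multiIdx 2 := by
  simp only [multiIdx, Finset.mem_filter, Fintype.mem_piFinset, Finset.mem_range,
    Fin.sum_univ_three]
  refine ⟨fun i => ?_, hm⟩
  fin_cases i <;> simp <;> omega

lemma pd_eq_pdM (f : E3 → ℝ) (i : Fin 3) : ∃ m ∈ multiIdx 2, pd i f = pdM m f := by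
  fin_cases i
  · exact ⟨![1, 0, 0], mem_multiIdx_two _ (by simp), rfl⟩
  · exact ⟨![0, 1, 0], mem_multiIdx_two _ (by simp), rfl⟩
  · exact ⟨![0, 0, 1], mem_multiIdx_two _ (by simp), rfl⟩

lemma pd_pd_eq_pdM {f : E3 → ℝ} (hf : ContDiff ℝ (⊤ : ℕ∞) f) (i j : Fin 3) :
    ∃ m ∈ multiIdx 2, pd i (pd j f) = pdM m f := by
  wlog hij : i ≤ j generalizing i j
  · rw [pd_comm hf]
    exact this j i (le_of_not_ge hij)
  fin_cases i <;> fin_cases j <;> first | exact absurd hij (by decide) | skip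
  · exact ⟨![2, 0, 0], mem_multiIdx_two _ (by simp), rfl⟩
  · exact ⟨![1, 1, 0], mem_multiIdx_two _ (by simp), rfl⟩
  · exact ⟨![1, 0, 1], mem_multiIdx_two _ (by simp), rfl⟩
  · exact ⟨![0, 2, 0], mem_multiIdx_two _ (by simp), rfl⟩
  · exact ⟨![0, 1, 1], mem_multiIdx_two _ (by simp), rfl⟩
  · exact ⟨![0, 0, 2], mem_multiIdx_two _ (by simp), rfl⟩

lemma abs_pdM_le_Gs (h : E3 → ℝ) {m : Fin 3 → ℕ} (hm : m ∈ multiIdx 2) (v : E3) :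
    |pdM m h v| ≤ Gs h v :=
  Finset.single_le_sum (f := fun m => |pdM m h v|) (fun _ _ => abs_nonneg _) hm

lemma abs_le_Gs (h : E3 → ℝ) (v : E3) : |h v| ≤ Gs h v :=
  abs_pdM_le_Gs h (m := ![0, 0, 0]) (mem_multiIdx_two _ (by simp)) v

lemma abs_pd_le_Gs (h : E3 → ℝ) (i : Fin 3) (v : E3) : |pd i h v| ≤ Gs h v := by
  obtain ⟨m, hm, e⟩ := pd_eq_pdM h i
  exact e ▸ abs_pdM_le_Gs h hm v

lemma abs_pd_pd_le_Gs {h : E3 → ℝ} (hh : ContDiff ℝ (⊤ : ℕ∞) h) (i j : Fin 3) (v : E3) :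
    |pd i (pd j h) v| ≤ Gs h v := by
  obtain ⟨m, hm, e⟩ := pd_pd_eq_pdM hh i j
  exact e ▸ abs_pdM_le_Gs h hm v

lemma memLp_Gs (h : SchwartzMap E3 ℝ) (s : ℝ) :
    MemLp (fun v => Gs ⇑h v * jap v ^ s) 2 volume := by
  have : (fun v => Gs ⇑h v * jap v ^ s) =
      fun v => ∑ m ∈ multiIdx 2, |pdM m ⇑h v| * jap v ^ s := by
    ext v; rw [Gs, Finset.sum_mul]
  rw [this]
  refine memLp_finsetSum _ fun m _ => ?_
  obtain ⟨g, hg⟩ := schwartz_pdM h m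
  rw [← hg]
  exact memLp_schwartz_weight g s

lemma Lpl_two_sq (s : ℝ) (f : E3 → ℝ) : (Lpl 2 s f) ^ 2 = ∫ v, (|f v| * jap v ^ s) ^ 2 := by
  have h : ∀ v, |f v| ^ (2 : ℝ) * jap v ^ (s * 2) = (|f v| * jap v ^ s) ^ 2 := fun v => by
    rw [rpow_mul (jap_pos v).le, mul_pow]; norm_cast
  rw [Lpl]
  simp only [h]
  rw [← Real.sqrt_eq_rpow, Real.sq_sqrt (integral_nonneg fun v => by positivity)]

/-- `‖∑_{|m| ≤ 2} |∂^m h|‖²_{L²_s} ≤ c ‖h‖²_{H²_s}` where `c` is the number of multi-indices. -/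
lemma integral_Gs_le (h : SchwartzMap E3 ℝ) (s : ℝ) :
    ∫ v, (Gs ⇑h v * jap v ^ s) ^ 2 ≤ ((multiIdx 2).card : ℝ) * HSob 2 s ⇑h ^ 2 := by
  have hs : HSob 2 s ⇑h ^ 2 = ∑ m ∈ multiIdx 2, ∫ v, (|pdM m ⇑h v| * jap v ^ s) ^ 2 := by
    rw [HSob, HSobSq, Real.sq_sqrt (Finset.sum_nonneg fun _ _ => sq_nonneg _)]
    simp only [Lpl_two_sq]
  have hi : ∀ m ∈ multiIdx 2, Integrable fun v => (|pdM m ⇑h v| * jap v ^ s) ^ 2 := by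
    intro m _
    obtain ⟨g, hg⟩ := schwartz_pdM h m
    rw [← hg]
    exact (memLp_schwartz_weight g s).integrable_sq
  rw [hs, ← integral_finsetSum _ hi, ← integral_const_mul]
  refine integral_mono (memLp_Gs h s).integrable_sq ((integrable_finsetSum _ hi).const_mul _)
    fun v => ?_
  simp only [Gs, Finset.sum_mul]
  exact sq_sum_le_card_mul_sum_sq

/-! ### Convolution estimates -/

lemma integrable_weight {k : ℝ} (hk : 7 / 2 < k) : Integrable fun w => (jap w ^ (-k)) ^ 2 := by
  have h := integrable_rpow_neg_one_add_norm_sq (E := E3) (μ := volume) (r := 2 * k)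
    (by simp; linarith)
  refine h.congr (.of_forall fun w => ?_)
  simp only
  rw [jap, Real.sqrt_eq_rpow, ← rpow_mul (by positivity), ← rpow_mul_natCast (by positivity)]
  congr 1
  push_cast
  ring

/-- `sup_v ∫ |v-w|⁻² ⟨w⟩^{-2k} dw` is finite. -/
lemma memLp_kernel {k : ℝ} (hk : 7 / 2 < k) (v : E3) :
    MemLp (fun w => ‖v - w‖⁻¹ * jap w ^ (-k)) 2 volume ∧
    ∫ w, (‖v - w‖⁻¹ * jap w ^ (-k)) ^ 2 ≤ (∫ z, qK z) + ∫ w, (jap w ^ (-k)) ^ 2 := by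
  have hm : AEStronglyMeasurable (fun w => ‖v - w‖⁻¹ * jap w ^ (-k)) volume := by
    have := (continuous_jap_rpow (-k)).measurable
    exact Measurable.aestronglyMeasurable (by fun_prop)
  have hq : Integrable fun w => qK (v - w) := integrable_qK.comp_sub_left v
  have hb : ∀ w, (‖v - w‖⁻¹ * jap w ^ (-k)) ^ 2 ≤ qK (v - w) + (jap w ^ (-k)) ^ 2 := fun w => by
    have h0 : 0 ≤ jap w ^ (-k) := rpow_nonneg (jap_pos w).le _
    have h1 : jap w ^ (-k) ≤ 1 := rpow_le_one_of_one_le_of_nonpos (one_le_jap w) (by linarith)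
    have h2 : (jap w ^ (-k)) ^ 2 ≤ 1 := pow_le_one₀ h0 h1
    rw [mul_pow]
    calc _ ≤ (qK (v - w) + 1) * (jap w ^ (-k)) ^ 2 := by gcongr; exact inv_sq_le_qK _
      _ = qK (v - w) * (jap w ^ (-k)) ^ 2 + (jap w ^ (-k)) ^ 2 := by ring
      _ ≤ _ := by
        have := mul_le_of_le_one_right (qK_nonneg (v - w)) h2
        linarith
  have hi : Integrable fun w => (‖v - w‖⁻¹ * jap w ^ (-k)) ^ 2 :=
    (hq.add (integrable_weight hk)).mono' (hm.pow 2) (.of_forall fun w => by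
      rw [Real.norm_eq_abs, abs_of_nonneg (sq_nonneg _)]; exact hb w)
  refine ⟨(memLp_two_iff_integrable_sq hm).2 hi, ?_⟩
  calc _ ≤ ∫ w, (qK (v - w) + (jap w ^ (-k)) ^ 2) := integral_mono hi (hq.add (integrable_weight hk)) hb
    _ = _ := by
      rw [integral_add hq (integrable_weight hk), integral_sub_left_eq_self]

/-- The constant `2 (∫ qK + ∫ ⟨w⟩^{-2k})^{1/2}` of the Cauchy–Schwarz bound for `a_ij * g`. -/
def KK (k : ℝ) : ℝ := 2 * Real.sqrt ((∫ z, qK z) + ∫ w, (jap w ^ (-k)) ^ 2)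

lemma KK_nonneg (k : ℝ) : 0 ≤ KK k := by unfold KK; positivity

/-- Uniform Cauchy–Schwarz bound for `a_ij * g`, for `g` with `|g| ⟨·⟩^k ≤ T · G`. -/
lemma abs_cv_le {k : ℝ} (hk : 7 / 2 < k) (i j : Fin 3) {g G : E3 → ℝ} {T : ℝ} (hT : 0 ≤ T)
    (hG0 : ∀ w, 0 ≤ G w) (hG : MemLp G 2 volume)
    (hg : ∀ w, |g w| * jap w ^ k ≤ T * G w) (v : E3) :
    |cv i j g v| ≤ KK k * T * Real.sqrt (∫ w, G w ^ 2) := by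
  obtain ⟨hm, hle⟩ := memLp_kernel hk v
  have hint : Integrable fun w => (‖v - w‖⁻¹ * jap w ^ (-k)) * G w := hm.integrable_mul hG
  have hcs : ∫ w, (‖v - w‖⁻¹ * jap w ^ (-k)) * G w ≤
      Real.sqrt (∫ w, (‖v - w‖⁻¹ * jap w ^ (-k)) ^ 2) * Real.sqrt (∫ w, G w ^ 2) := by
    have := integral_mul_le_Lp_mul_Lq_of_nonneg (μ := volume) Real.HolderConjugate.two_two
      (f := fun w => ‖v - w‖⁻¹ * jap w ^ (-k)) (g := G)
      (.of_forall fun w => mul_nonneg (by positivity) (rpow_nonneg (jap_pos w).le _))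
      (.of_forall hG0) (by simpa using hm) (by simpa using hG)
    simpa [Real.sqrt_eq_rpow] using this
  have hb : ∀ w, ‖aK (v - w) i j * g w‖ ≤ 2 * T * ((‖v - w‖⁻¹ * jap w ^ (-k)) * G w) := fun w => by
    have h0 : 0 < jap w ^ k := rpow_pos_of_pos (jap_pos w) _
    have h1 : |g w| ≤ T * G w * jap w ^ (-k) := by
      rw [rpow_neg (jap_pos w).le, ← div_eq_mul_inv, le_div_iff₀ h0]
      exact hg w
    rw [Real.norm_eq_abs, abs_mul]
    calc _ ≤ (2 * ‖v - w‖⁻¹) * (T * G w * jap w ^ (-k)) :=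
          mul_le_mul (abs_aK_le _ _ _) h1 (abs_nonneg _) (by positivity)
      _ = _ := by ring
  calc |cv i j g v| ≤ ∫ w, 2 * T * ((‖v - w‖⁻¹ * jap w ^ (-k)) * G w) :=
        norm_integral_le_of_norm_le (hint.const_mul _) (.of_forall hb)
    _ = 2 * T * ∫ w, (‖v - w‖⁻¹ * jap w ^ (-k)) * G w := integral_const_mul _ _
    _ ≤ 2 * T * (Real.sqrt ((∫ z, qK z) + ∫ w, (jap w ^ (-k)) ^ 2) * Real.sqrt (∫ w, G w ^ 2)) := by
        gcongr
        exact hcs.trans (by gcongr)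
    _ = _ := by rw [KK]; ring

/-! ### Products with a cutoff -/

lemma pd_mul {f g : E3 → ℝ} (hf : ContDiff ℝ (⊤ : ℕ∞) f) (hg : ContDiff ℝ (⊤ : ℕ∞) g)
    (i : Fin 3) : pd i (fun w => f w * g w) = fun w => f w * pd i g w + pd i f w * g w := by
  ext v
  have h := ((hf.differentiable (by simp)) v).hasFDerivAt.mul
    ((hg.differentiable (by simp)) v).hasFDerivAt
  simp only [pd]
  rw [HasFDerivAt.fderiv (f := fun w => f w * g w) h]
  simp only [_root_.add_apply, _root_.smul_apply, smul_eq_mul]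
  ring

lemma pd_add {f g : E3 → ℝ} (hf : ContDiff ℝ (⊤ : ℕ∞) f) (hg : ContDiff ℝ (⊤ : ℕ∞) g)
    (i : Fin 3) : pd i (fun w => f w + g w) = fun w => pd i f w + pd i g w := by
  ext v
  have h := ((hf.differentiable (by simp)) v).hasFDerivAt.add
    ((hg.differentiable (by simp)) v).hasFDerivAt
  simp only [pd]
  rw [HasFDerivAt.fderiv (f := fun w => f w + g w) h]
  rfl

lemma pd_congr {f g : E3 → ℝ} {v : E3} (h : f =ᶠ[nhds v] g) (i : Fin 3) :
    pd i f =ᶠ[nhds v] pd i g :=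
  (h.fderiv (𝕜 := ℝ)).mono fun w hw => by simp only [pd, hw]

lemma abs_pd_pd_mul_le {h χ : E3 → ℝ} (hh : ContDiff ℝ (⊤ : ℕ∞) h)
    (hχ : ContDiff ℝ (⊤ : ℕ∞) χ) {D : ℝ} (h0 : ∀ v, |χ v| ≤ D) (h1 : ∀ i v, |pd i χ v| ≤ D)
    (h2 : ∀ i j v, |pd i (pd j χ) v| ≤ D) (i j : Fin 3) (v : E3) :
    |pd i (pd j fun w => h w * χ w) v| ≤ 4 * D * Gs h v := by
  rw [pd_mul hh hχ, pd_add (hh.mul (contDiff_pd hχ j)) ((contDiff_pd hh j).mul hχ),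
    pd_mul hh (contDiff_pd hχ j), pd_mul (contDiff_pd hh j) hχ]
  have b : ∀ {x y : ℝ}, |x| ≤ Gs h v → |y| ≤ D → |x * y| ≤ Gs h v * D := fun hx hy => by
    rw [abs_mul]; exact mul_le_mul hx hy (abs_nonneg _) (Gs_nonneg h v)
  have e1 := b (abs_le_Gs h v) (h2 i j v)
  have e2 := b (abs_pd_le_Gs h i v) (h1 j v)
  have e3 := b (abs_pd_le_Gs h j v) (h1 i v)
  have e4 := b (abs_pd_pd_le_Gs hh i j v) (h0 v)
  simp only
  calc _ ≤ (|h v * pd i (pd j χ) v| + |pd i h v * pd j χ v|) +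
        (|pd j h v * pd i χ v| + |pd i (pd j h) v * χ v|) :=
        (abs_add_le _ _).trans (add_le_add (abs_add_le _ _) (abs_add_le _ _))
    _ ≤ _ := by linarith

lemma abs_sum_sum_le {x : Fin 3 → Fin 3 → ℝ} {B : ℝ} (h : ∀ i j, |x i j| ≤ B) :
    |∑ i, ∑ j, x i j| ≤ 9 * B := by
  calc |∑ i, ∑ j, x i j| ≤ ∑ i, ∑ j, |x i j| :=
        (Finset.abs_sum_le_sum_abs _ _).trans
          (Finset.sum_le_sum fun i _ => Finset.abs_sum_le_sum_abs _ _)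
    _ ≤ ∑ _i : Fin 3, ∑ _j : Fin 3, B :=
        Finset.sum_le_sum fun i _ => Finset.sum_le_sum fun j _ => h i j
    _ = 9 * B := by simp; ring

lemma abs_mul_sub_mul_le {a b c d A B : ℝ} (ha : |a| ≤ A) (hb : |b| ≤ B) (hc : |c| ≤ B)
    (hd : |d| ≤ A) : |a * b - c * d| ≤ 2 * (A * B) := by
  have hA := (abs_nonneg _).trans ha
  have hB := (abs_nonneg _).trans hb
  calc |a * b - c * d| ≤ |a * b| + |c * d| := abs_sub _ _
    _ ≤ A * B + B * A := by
        rw [abs_mul, abs_mul]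
        exact add_le_add (mul_le_mul ha hb (abs_nonneg _) hA) (mul_le_mul hc hd (abs_nonneg _) hB)
    _ = _ := by ring

lemma weight_far {l k R : ℝ} (hl : 0 < l) (hR : 1 ≤ R) {w : E3} (hw : R / 2 ≤ ‖w‖) :
    jap w ^ k ≤ 2 ^ l * R ^ (-l) * jap w ^ (k + l) := by
  have h1 : (R / 2) ^ l ≤ jap w ^ l :=
    rpow_le_rpow (by positivity) (hw.trans (norm_le_jap w)) hl.le
  have h2 : 2 ^ l * R ^ (-l) * (R / 2) ^ l = 1 := by
    have hR0 : 0 < R := by linarith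
    rw [div_rpow hR0.le (by norm_num), rpow_neg hR0.le]
    have : R ^ l ≠ 0 := (rpow_pos_of_pos hR0 l).ne'
    have : (2 : ℝ) ^ l ≠ 0 := (rpow_pos_of_pos (by norm_num) l).ne'
    field_simp
  have hj : 0 ≤ jap w ^ k := rpow_nonneg (jap_pos w).le _
  have hc : 0 ≤ 2 ^ l * R ^ (-l) := by positivity
  rw [rpow_add (jap_pos w)]
  calc jap w ^ k = jap w ^ k * (2 ^ l * R ^ (-l) * (R / 2) ^ l) := by rw [h2, mul_one]
    _ ≤ jap w ^ k * (2 ^ l * R ^ (-l) * jap w ^ l) := by gcongr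
    _ = _ := by ring

/-- Weighted pointwise bound for the residual. For `|v| ≥ R/2` the factor `R^{-l}` comes from the
weight at `v`; for `|v| < R/2` only convolutions of functions supported in `|w| ≥ R/2` survive, and
the factor comes from the weight inside the convolution. -/
lemma residual_pointwise {l k D R : ℝ} (hl : 0 < l) (hk : 7 / 2 < k) (hD : 1 ≤ D) (hR : 1 ≤ R)
    {ψ : E3 → ℝ} (hψ : ContDiff ℝ (⊤ : ℕ∞) ψ) (hcs : HasCompactSupport ψ)
    (hψ0 : ∀ v, 0 ≤ ψ v) (hψ1 : ∀ v, ψ v ≤ 1) (hψn : ∀ v, ‖v‖ ≤ R / 2 → ψ v = 1)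
    (hd1 : ∀ i v, |pd i ψ v| ≤ D) (hd2 : ∀ i j v, |pd i (pd j ψ) v| ≤ D)
    (h : SchwartzMap E3 ℝ) (v : E3) :
    |residualR ψ ⇑h v| * jap v ^ k ≤
      576 * KK k * D ^ 2 * 2 ^ l * R ^ (-l) * Real.sqrt (∫ w, (Gs ⇑h w * jap w ^ (k + l)) ^ 2) *
        (Gs ⇑h v * jap v ^ (k + l)) := by
  have hh : ContDiff ℝ (⊤ : ℕ∞) ⇑h := h.smooth _
  set N := Real.sqrt (∫ w, (Gs ⇑h w * jap w ^ (k + l)) ^ 2) with hN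
  have hN0 : 0 ≤ N := Real.sqrt_nonneg _
  have hK := KK_nonneg k
  have hG := Gs_nonneg ⇑h
  have hGj : ∀ w, 0 ≤ Gs ⇑h w * jap w ^ (k + l) := fun w =>
    mul_nonneg (hG w) (rpow_nonneg (jap_pos w).le _)
  have hjk : ∀ w, 0 ≤ jap w ^ k := fun w => rpow_nonneg (jap_pos w).le _
  have hmono : ∀ w, jap w ^ k ≤ jap w ^ (k + l) := fun w =>
    rpow_le_rpow_of_exponent_le (one_le_jap w) (by linarith)
  have hρ : 0 ≤ (2 : ℝ) ^ l * R ^ (-l) := by positivity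
  set ρ := (2 : ℝ) ^ l * R ^ (-l) with hρdef
  -- The truncated function as a Schwartz map.
  obtain ⟨P, hP⟩ : ∃ P : SchwartzMap E3 ℝ, (⇑P : E3 → ℝ) = fun w => h w * ψ w :=
    ⟨(hcs.mul_left (f := ⇑h)).toSchwartzMap (hh.mul hψ), rfl⟩
  have hψa : ∀ v, |ψ v| ≤ D := fun v => by
    rw [abs_of_nonneg (hψ0 v)]; exact (hψ1 v).trans hD
  have hP0 : ∀ w, |P w| ≤ 4 * D * Gs ⇑h w := fun w => by
    rw [hP, abs_mul]
    have := mul_le_mul (abs_le_Gs ⇑h w) (hψa w) (abs_nonneg _) (hG w)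
    nlinarith [mul_nonneg (hG w) (zero_le_one.trans hD)]
  have hP2 : ∀ i j w, |pd i (pd j ⇑P) w| ≤ 4 * D * Gs ⇑h w := fun i j w => by
    rw [hP]; exact abs_pd_pd_mul_le hh hψ hψa hd1 hd2 i j w
  have hGD : ∀ w, Gs ⇑h w ≤ 4 * D * Gs ⇑h w := fun w => by nlinarith [hG w]
  rw [residualR, ← hP]
  by_cases hv : ‖v‖ < R / 2
  · set χ : E3 → ℝ := fun w => ψ w + (-1) with hχdef
    have hχ : ContDiff ℝ (⊤ : ℕ∞) χ := hψ.add contDiff_const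
    have hpc : ∀ (i : Fin 3) (c : ℝ), pd i (fun _ : E3 => c) = fun _ => 0 := fun i c => by
      ext w; simp [pd]
    have hχ1 : ∀ i, pd i χ = pd i ψ := fun i => by
      rw [hχdef, pd_add hψ contDiff_const, hpc]; simp
    set q : E3 → ℝ := fun w => h w * χ w with hq
    have hqs : ContDiff ℝ (⊤ : ℕ∞) q := hh.mul hχ
    have hPq : (⇑P : E3 → ℝ) = fun w => h w + q w := by
      rw [hP]; ext w; simp only [hq, hχdef]; ring
    have hPq2 : ∀ i j, pd i (pd j ⇑P) = fun w => pd i (pd j ⇑h) w + pd i (pd j q) w := by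
      intro i j
      rw [hPq, pd_add hh hqs, pd_add (contDiff_pd hh j) (contDiff_pd hqs j)]
    have hχa : ∀ w, |χ w| ≤ D := fun w => by
      rw [abs_le]; constructor <;> simp only [hχdef] <;> linarith [hψ0 w, hψ1 w]
    -- `q = h (ψ - 1)` vanishes to all orders on the open ball of radius `R / 2`.
    have hq0 : ∀ w : E3, ‖w‖ < R / 2 → q =ᶠ[nhds w] fun _ => 0 := by
      intro w hw
      have : {x : E3 | ‖x‖ < R / 2} ∈ nhds w :=
        (isOpen_lt continuous_norm continuous_const).mem_nhds hw
      filter_upwards [this] with x hx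
      simp [hq, hχdef, hψn x hx.le]
    have hq2 : ∀ i j w, ‖w‖ < R / 2 → pd i (pd j q) w = 0 := by
      intro i j w hw
      have := (pd_congr (pd_congr (hq0 w hw) j) i).eq_of_nhds
      rw [this, hpc, hpc]
    have hfar : ∀ f : E3 → ℝ, (∀ w, |f w| ≤ 4 * D * Gs ⇑h w) →
        (∀ w, ‖w‖ < R / 2 → f w = 0) →
        ∀ i j, |cv i j f v| ≤ KK k * (4 * D * ρ) * N := by
      intro f hf hf0 i j
      refine abs_cv_le hk i j (by positivity) hGj (memLp_Gs h (k + l)) (fun w => ?_) v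
      by_cases hw : ‖w‖ < R / 2
      · rw [hf0 w hw]
        have := hGj w
        simp only [abs_zero, zero_mul]
        positivity
      · have := weight_far (k := k) hl hR (not_lt.1 hw)
        calc |f w| * jap w ^ k ≤ (4 * D * Gs ⇑h w) * (ρ * jap w ^ (k + l)) :=
              mul_le_mul (hf w) this (hjk w) ((abs_nonneg _).trans (hf w))
          _ = _ := by ring
    have hb1 := hfar q (fun w => by
      rw [hq, abs_mul]
      have := mul_le_mul (abs_le_Gs ⇑h w) (hχa w) (abs_nonneg _) (hG w)
      nlinarith [mul_nonneg (hG w) (zero_le_one.trans hD)]) fun w hw => (hq0 w hw).eq_of_nhds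
    have hb2 := fun i j => hfar (pd i (pd j q)) (fun w => abs_pd_pd_mul_le hh hχ hχa
      (fun i v => by rw [hχ1]; exact hd1 i v) (fun i j v => by rw [hχ1]; exact hd2 i j v) i j w)
      (hq2 i j) i j
    have hψv : ψ v = 1 := hψn v hv.le
    have hPv : P v = h v := by rw [hP]; simp [hψv]
    have hPv2 : ∀ i j, pd i (pd j ⇑P) v = pd i (pd j ⇑h) v := fun i j => by
      rw [hPq2]; simp [hq2 i j v hv]
    have hc1 : ∀ i j, cv i j ⇑P v - cv i j ⇑h v = cv i j q v := fun i j => by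
      rw [cv, cv, ← integral_sub (integrable_aK i j P v) (integrable_aK i j h v), cv, hPq]
      congr 1; ext w; ring
    have hc2 : ∀ i j, cv i j (pd i (pd j ⇑P)) v - cv i j (pd i (pd j ⇑h)) v =
        cv i j (pd i (pd j q)) v := fun i j => by
      have hi : ∀ f : SchwartzMap E3 ℝ, Integrable fun w => aK (v - w) i j * pd i (pd j ⇑f) w := by
        intro f
        obtain ⟨f₁, e₁⟩ := schwartz_pd f j
        obtain ⟨f₂, e₂⟩ := schwartz_pd f₁ i
        rw [← e₁, ← e₂]
        exact integrable_aK i j f₂ v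
      rw [cv, cv, ← integral_sub (hi P) (hi h), cv, hPq2]
      congr 1; ext w; ring
    have hres : landauQ ⇑P ⇑P v * ψ v - landauQ ⇑h ⇑h v = ∑ i : Fin 3, ∑ j : Fin 3,
        (cv i j q v * pd i (pd j ⇑h) v - h v * cv i j (pd i (pd j q)) v) := by
      rw [hψv, mul_one, landauQ_eq, landauQ_eq, ← Finset.sum_sub_distrib]
      refine Finset.sum_congr rfl fun i _ => ?_
      rw [← Finset.sum_sub_distrib]
      refine Finset.sum_congr rfl fun j _ => ?_
      rw [← hc1, ← hc2, hPv, hPv2]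
      ring
    have hbound := abs_sum_sum_le fun i j => abs_mul_sub_mul_le (hb1 i j)
      (abs_pd_pd_le_Gs hh i j v) (abs_le_Gs ⇑h v) (hb2 i j)
    rw [hres]
    calc _ ≤ 9 * (2 * (KK k * (4 * D * ρ) * N * Gs ⇑h v)) * jap v ^ (k + l) :=
          mul_le_mul hbound (hmono v) (hjk v) ((abs_nonneg _).trans hbound)
      _ = 72 * D * (KK k * ρ * N * (Gs ⇑h v * jap v ^ (k + l))) := by ring
      _ ≤ 576 * D ^ 2 * (KK k * ρ * N * (Gs ⇑h v * jap v ^ (k + l))) := by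
          have := hGj v
          have h3 : 72 * D ≤ 576 * D ^ 2 := by nlinarith
          gcongr
      _ = _ := by rw [hρdef]; ring
  · have hall : ∀ f : E3 → ℝ, (∀ w, |f w| ≤ 4 * D * Gs ⇑h w) →
        ∀ i j, |cv i j f v| ≤ KK k * (4 * D) * N := by
      intro f hf i j
      refine abs_cv_le hk i j (by positivity) hGj (memLp_Gs h (k + l)) (fun w => ?_) v
      calc |f w| * jap w ^ k ≤ (4 * D * Gs ⇑h w) * jap w ^ (k + l) :=
            mul_le_mul (hf w) (hmono w) (hjk w) ((abs_nonneg _).trans (hf w))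
        _ = _ := by ring
    have hQ : ∀ f : SchwartzMap E3 ℝ, (∀ w, |f w| ≤ 4 * D * Gs ⇑h w) →
        (∀ i j w, |pd i (pd j ⇑f) w| ≤ 4 * D * Gs ⇑h w) →
        |landauQ ⇑f ⇑f v| ≤ 9 * (2 * (KK k * (4 * D) * N * (4 * D * Gs ⇑h v))) := by
      intro f hf hf2
      rw [landauQ_eq]
      exact abs_sum_sum_le fun i j => abs_mul_sub_mul_le (hall _ hf i j) (hf2 i j v) (hf v)
        (hall _ (hf2 i j) i j)
    have h1 := hQ P hP0 hP2
    have h2 := hQ h (fun w => (abs_le_Gs ⇑h w).trans (hGD w))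
      (fun i j w => (abs_pd_pd_le_Gs hh i j w).trans (hGD w))
    have h3 : |landauQ ⇑P ⇑P v * ψ v| ≤ |landauQ ⇑P ⇑P v| := by
      rw [abs_mul, abs_of_nonneg (hψ0 v)]
      exact mul_le_of_le_one_right (abs_nonneg _) (hψ1 v)
    have h4 := (abs_sub (landauQ ⇑P ⇑P v * ψ v) (landauQ ⇑h ⇑h v)).trans
      (add_le_add (h3.trans h1) h2)
    calc _ ≤ _ := mul_le_mul h4 (weight_far (k := k) hl hR (not_lt.1 hv)) (hjk v)
          ((abs_nonneg _).trans h4)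
      _ = _ := by ring

/-- the residual is small. Let `l > 0`, `k > 7/2` and fix a constant `Cψ > 0` for
the derivative bounds of the cutoffs. There exists `C = C(k,l)` such that for every `R ≥ 1` and
every radial smooth cutoff `ψ ∈ C_c^∞(B(0,R))` with `1_{|v|≤R/2} ≤ ψ ≤ 1_{|v|≤R}` and
`‖∂^α ψ‖_∞ ≤ Cψ R^{−|α|}` for `|α| ≤ 2`, and every Schwartz `h`:
`‖R(h)‖_{L²_k} ≤ C R^{−l} ‖h‖²_{H²_{k+l}}`. -/
theorem residual_estimate (l k Cψ : ℝ) (hl : 0 < l) (hk : 7 / 2 < k) (hCψ : 0 < Cψ) :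
    ∃ C > 0, ∀ R : ℝ, 1 ≤ R →
      ∀ ψ : E3 → ℝ, ContDiff ℝ (⊤ : ℕ∞) ψ → HasCompactSupport ψ →
        (∃ φ : ℝ → ℝ, ∀ v, ψ v = φ ‖v‖) →
        (∀ v, (if ‖v‖ ≤ R / 2 then (1 : ℝ) else 0) ≤ ψ v) →
        (∀ v, ψ v ≤ (if ‖v‖ ≤ R then (1 : ℝ) else 0)) →
        (∀ m ∈ multiIdx 2, ∀ v, |pdM m ψ v| ≤ Cψ * R ^ (-((∑ i, m i : ℕ) : ℝ))) →
      ∀ h : SchwartzMap E3 ℝ,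
        Lpl 2 k (residualR ψ (⇑h)) ≤ C * R ^ (-l) * (HSob 2 (k + l) (⇑h)) ^ 2 := by
  set D := 1 + Cψ with hD
  have hD1 : 1 ≤ D := by linarith
  set C₀ := 576 * KK k * D ^ 2 * 2 ^ l with hC₀
  have hK := KK_nonneg k
  have hC₀0 : 0 ≤ C₀ := by positivity
  refine ⟨C₀ * (multiIdx 2).card + 1, by positivity, ?_⟩
  intro R hR ψ hψ hcs _ hlow hup hder h
  have hψ0 : ∀ v, 0 ≤ ψ v := fun v => le_trans (by split_ifs <;> simp) (hlow v)
  have hψ1 : ∀ v, ψ v ≤ 1 := fun v => (hup v).trans (by split_ifs <;> simp)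
  have hψn : ∀ v, ‖v‖ ≤ R / 2 → ψ v = 1 := fun v hv =>
    le_antisymm (hψ1 v) (by simpa [hv] using hlow v)
  have hder' : ∀ m ∈ multiIdx 2, ∀ v, |pdM m ψ v| ≤ D := fun m hm v => by
    have h1 : R ^ (-((∑ i, m i : ℕ) : ℝ)) ≤ 1 :=
      rpow_le_one_of_one_le_of_nonpos hR (by simp only [Left.neg_nonpos_iff]; positivity)
    have := mul_le_of_le_one_right hCψ.le h1
    linarith [hder m hm v]
  have hd1 : ∀ i v, |pd i ψ v| ≤ D := fun i v => by
    obtain ⟨m, hm, e⟩ := pd_eq_pdM ψ i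
    exact e ▸ hder' m hm v
  have hd2 : ∀ i j v, |pd i (pd j ψ) v| ≤ D := fun i j v => by
    obtain ⟨m, hm, e⟩ := pd_pd_eq_pdM hψ i j
    exact e ▸ hder' m hm v
  have hpt := residual_pointwise hl hk hD1 hR hψ hcs hψ0 hψ1 hψn hd1 hd2 h
  set I := ∫ w, (Gs ⇑h w * jap w ^ (k + l)) ^ 2 with hI
  have hI0 : 0 ≤ I := integral_nonneg fun _ => sq_nonneg _
  have hRl : 0 ≤ R ^ (-l) := by positivity
  have hsq : Lpl 2 k (residualR ψ ⇑h) ^ 2 ≤ (C₀ * R ^ (-l) * I) ^ 2 := by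
    rw [Lpl_two_sq]
    calc _ ≤ ∫ v, (C₀ * R ^ (-l) * √I) ^ 2 * (Gs ⇑h v * jap v ^ (k + l)) ^ 2 := by
          refine integral_mono_of_nonneg (.of_forall fun _ => sq_nonneg _)
            ((memLp_Gs h (k + l)).integrable_sq.const_mul _) (.of_forall fun v => ?_)
          simp only [← mul_pow]
          exact pow_le_pow_left₀ (mul_nonneg (abs_nonneg _) (rpow_nonneg (jap_pos v).le _))
            (hpt v) 2
      _ = (C₀ * R ^ (-l)) ^ 2 * √I ^ 2 * I := by rw [integral_const_mul]; ring
      _ = _ := by rw [Real.sq_sqrt hI0]; ring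
  calc Lpl 2 k (residualR ψ ⇑h) ≤ C₀ * R ^ (-l) * I := le_of_sq_le_sq hsq (by positivity)
    _ ≤ C₀ * R ^ (-l) * ((multiIdx 2).card * HSob 2 (k + l) ⇑h ^ 2) := by
        gcongr
        exact integral_Gs_le h (k + l)
    _ = C₀ * (multiIdx 2).card * R ^ (-l) * HSob 2 (k + l) ⇑h ^ 2 := by ring
    _ ≤ _ := by gcongr; linarith

end
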